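/- Let δ21 = X² + 2X + 2, δ22 = X² + 2, δ41 = X⁴ + 2X³ + 2X² + 4X + 4, δ81 = X⁸ + 4X⁷ + 6X⁶ + 4X⁵ + 2X⁴ + 8X³ + 24X² + 32X + 16, and δ82 = X⁸ + 2X⁶ + 4X⁵ + 2X⁴ + 8X³ + 8X² + 16. Then for every n ≥ 4 (even or odd): F_2(n,0,0,0,0) = 2^{n−4} − (1/16)·(4ρ_n(δ21) + 3ρ_n(δ22) + ρ_n(δ41) + ρ_n(δ81) + ρ_n(δ82)); F_2(n,0,0,0,1) = 2^{n−4} − (1/16)·(−ρ_n(δ22) + ρ_n(δ41) − ρ_n(δ81) − ρ_n(δ82)); F_2(n,0,0,1,0) = 2^{n−4} − (1/16)·(−2ρ_n(δ21) + ρ_n(δ22) − ρ_n(δ41) + ρ_n(δ81) − ρ_n(δ82)); and F_2(n,0,0,1,1) = 2^{n−4} − (1/16)·(2ρ_n(δ21) − 3ρ_n(δ22) − ρ_n(δ41) − ρ_n(δ81) + ρ_n(δ82)). All equalities are between complex numbers, the counts being viewed in ℂ. -/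

import Mathlib

open Polynomial

/-- For a finite field `K` with `2^n` elements, the `k`-th trace function
`T_k(a) = Σ_S ∏_{i ∈ S} a^(2^i)`, the sum over all `k`-element subsets `S` of `{0,…,n-1}`. -/
noncomputable def traceFn (q n k : ℕ) {K : Type*} [CommRing K] (a : K) : K :=
  ∑ S ∈ Finset.powersetCard k (Finset.range n), ∏ i ∈ S, a ^ (q ^ i)

/-- `ρ_n(γ)`: the sum of the `n`-th powers of the complex roots of `γ ∈ ℤ[X]`,
counted with multiplicity. -/
noncomputable def rho (n : ℕ) (γ : Polynomial ℤ) : ℂ :=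
  ((γ.map (Int.castRingHom ℂ)).roots.map (· ^ n)).sum

/-- `F_2(n,t₁,t₂,t₃,t₄)`: the number of `a` in the field `K` (of `2^n` elements)
with `T_k(a) = t_k` for `k = 1,2,3,4`. -/
noncomputable def cnt4 (n : ℕ) (K : Type) [Field K] [Fintype K] (t1 t2 t3 t4 : K) : ℕ :=
  Nat.card {a : K // traceFn 2 n 1 a = t1 ∧ traceFn 2 n 2 a = t2 ∧
    traceFn 2 n 3 a = t3 ∧ traceFn 2 n 4 a = t4}

noncomputable def d21 : Polynomial ℤ := X ^ 2 + 2 * X + 2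
noncomputable def d22 : Polynomial ℤ := X ^ 2 + 2
noncomputable def d41 : Polynomial ℤ := X ^ 4 + 2 * X ^ 3 + 2 * X ^ 2 + 4 * X + 4
noncomputable def d81 : Polynomial ℤ :=
  X ^ 8 + 4 * X ^ 7 + 6 * X ^ 6 + 4 * X ^ 5 + 2 * X ^ 4 + 8 * X ^ 3 + 24 * X ^ 2 + 32 * X + 16
noncomputable def d82 : Polynomial ℤ :=
  X ^ 8 + 2 * X ^ 6 + 4 * X ^ 5 + 2 * X ^ 4 + 8 * X ^ 3 + 8 * X ^ 2 + 16

/-! The traces `T_k(a)` are, up to sign, the coefficients of the reversed characteristic polynomial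
of `a` over `𝔽₂`, and a monic `f` of degree `n` is the characteristic polynomial of exactly `Λ(f)`
elements of `K`. So `F₂(n, t₁, …, t₄)` is the sum of `Λ(f)` over the monic `f` of degree `n` whose
reversal lies in a given class of the group `1 + x 𝔽₂[x]/(x⁵) ≅ ℤ/8 × ℤ/2`, and orthogonality
expands it over the characters of this group. The L-series of a nontrivial character is a polynomial
of degree at most `3`, and its logarithmic derivative identifies the twisted sum of `Λ` with minus
the power sum of its inverse roots. Multiplying the reversed L-polynomials of all nontrivial
characters with given values on the classes where `t₁ = t₂ = 0` gives integer coefficients, and the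
products factor into powers of `X` and of the `δ`s. -/

section PowerSums

open scoped PowerSeries

variable {R : Type*} [CommRing R] [IsDomain R]

/-- The `n`-th power sum of the roots of `p` lying in `R`, counted with multiplicity. -/
noncomputable def rootPowerSum (n : ℕ) (p : R[X]) : R := (p.roots.map (· ^ n)).sum

lemma rootPowerSum_mul (n : ℕ) {p q : R[X]} (hpq : p * q ≠ 0) :
    rootPowerSum n (p * q) = rootPowerSum n p + rootPowerSum n q := by
  simp only [rootPowerSum, roots_mul hpq, Multiset.map_add, Multiset.sum_add]

lemma rootPowerSum_pow (n : ℕ) (p : R[X]) (k : ℕ) :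
    rootPowerSum n (p ^ k) = k * rootPowerSum n p := by
  simp only [rootPowerSum, roots_pow, Multiset.map_nsmul, Multiset.sum_nsmul, nsmul_eq_mul]

lemma rootPowerSum_X {n : ℕ} (hn : n ≠ 0) : rootPowerSum n (X : R[X]) = 0 := by
  simp [rootPowerSum, hn]

/-- The power series `∑ₖ pₖ₊₁ Xᵏ`, where `pₖ` is the `k`-th power sum of the roots of `p`.
Up to sign it is the logarithmic derivative of `p.reverse` when `p` splits. -/
noncomputable def newtonSeries (p : R[X]) : R⟦X⟧ :=
  PowerSeries.mk fun k => rootPowerSum (k + 1) p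

lemma newtonSeries_mul {p q : R[X]} (hpq : p * q ≠ 0) :
    newtonSeries (p * q) = newtonSeries p + newtonSeries q := by
  ext k
  simp only [newtonSeries, PowerSeries.coeff_mk, map_add, rootPowerSum_mul _ hpq]

lemma coe_reverse_X_sub_C (a : R) :
    ((X - C a).reverse : R⟦X⟧) = 1 - PowerSeries.C a * PowerSeries.X := by
  simp [reverse, reflect_sub]

lemma newtonSeries_X_sub_C_mul (a : R) :
    newtonSeries (X - C a) * ((X - C a).reverse : R⟦X⟧) = PowerSeries.C a := by
  ext k
  rw [coe_reverse_X_sub_C, mul_sub, mul_left_comm, mul_one, map_sub, PowerSeries.coeff_C_mul]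
  cases k <;> simp [newtonSeries, rootPowerSum, PowerSeries.coeff_C, PowerSeries.coeff_succ_mul_X,
    pow_succ']

theorem derivative_reverse_prod_X_sub_C (s : Multiset R) :
    d⁄dX R ((s.map fun a => X - C a).prod.reverse : R⟦X⟧) =
      -newtonSeries (s.map fun a => X - C a).prod *
        ((s.map fun a => X - C a).prod.reverse : R⟦X⟧) := by
  induction s using Multiset.induction with
  | empty =>
    have hone : newtonSeries (1 : R[X]) = 0 := by ext; simp [newtonSeries, rootPowerSum]
    have hreverse : (1 : R[X]).reverse = 1 := by rw [← C_1, reverse_C]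
    simp [hone, hreverse]
  | cons a s ih =>
    set p := (s.map fun a => X - C a).prod
    have hp : (X - C a) * p ≠ 0 :=
      ((monic_X_sub_C a).mul (monic_multiset_prod_of_monic _ _ fun b _ => monic_X_sub_C b)).ne_zero
    have hlinear : d⁄dX R ((X - C a).reverse : R⟦X⟧) =
        -newtonSeries (X - C a) * ((X - C a).reverse : R⟦X⟧) := by
      rw [neg_mul, newtonSeries_X_sub_C_mul, coe_reverse_X_sub_C]
      simp
    rw [Multiset.map_cons, Multiset.prod_cons, reverse_mul_of_domain, coe_mul, Derivation.leibniz,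
      ih, hlinear, newtonSeries_mul hp]
    simp only [smul_eq_mul]
    ring

theorem derivative_reverse_of_splits {p : R[X]} (hmonic : p.Monic) (hsplits : p.Splits) :
    d⁄dX R (p.reverse : R⟦X⟧) = -newtonSeries p * (p.reverse : R⟦X⟧) := by
  rw [hsplits.eq_prod_roots_of_monic hmonic]
  exact derivative_reverse_prod_X_sub_C p.roots

end PowerSums

section MonicOfDegree

variable {R : Type*} [CommRing R] [Nontrivial R]

/-- A monic polynomial of degree `m` is determined by its coefficients below the leading one,
listed here downwards from the coefficient of `X ^ (m - 1)`. -/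
noncomputable def monicEquivFun (m : ℕ) :
    {f : R[X] // f.Monic ∧ f.natDegree = m} ≃ (Fin m → R) :=
  ((monicEquivDegreeLT m).trans (degreeLTEquiv R m).toEquiv).trans
    (Equiv.arrowCongr Fin.revPerm (Equiv.refl R))

lemma monicEquivFun_apply {m : ℕ} (f : {f : R[X] // f.Monic ∧ f.natDegree = m}) (i : Fin m) :
    monicEquivFun m f i = f.1.reverse.coeff (i + 1) := by
  rw [coeff_reverse, f.2.2, revAt_le (show (i + 1 : ℕ) ≤ m from i.2)]
  have hlt : m - (i + 1 : ℕ) < f.1.natDegree := by have := f.2.2; omega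
  simp [monicEquivFun, monicEquivDegreeLT, degreeLTEquiv, eraseLead_coeff_of_ne _ hlt.ne]

lemma extend_monicEquivFun {m : ℕ} (f : {f : R[X] // f.Monic ∧ f.natDegree = m}) (i : ℕ) :
    Function.extend Fin.val (monicEquivFun m f) 0 i = f.1.reverse.coeff (i + 1) := by
  by_cases hi : i < m
  · rw [← monicEquivFun_apply f ⟨i, hi⟩]
    exact Fin.val_injective.extend_apply _ _ (⟨i, hi⟩ : Fin m)
  · rw [Function.extend_apply' _ _ _ (by rintro ⟨j, rfl⟩; exact hi j.2), Pi.zero_apply,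
      coeff_eq_zero_of_natDegree_lt]
    have := reverse_natDegree_le f.1
    have := f.2.2
    omega

variable [Finite R]

variable (R) in
lemma finite_monic_natDegree_eq (m : ℕ) : {f : R[X] | f.Monic ∧ f.natDegree = m}.Finite :=
  Set.finite_coe_iff.1 (Finite.of_equiv (Fin m → R) (monicEquivFun m).symm)

variable (R) in
/-- The finite set of monic polynomials of degree `m` over the finite ring `R`. -/
noncomputable def monicOfDegree (m : ℕ) : Finset R[X] :=
  (finite_monic_natDegree_eq R m).toFinset

@[simp]
lemma mem_monicOfDegree {m : ℕ} {f : R[X]} :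
    f ∈ monicOfDegree R m ↔ f.Monic ∧ f.natDegree = m := by
  simp [monicOfDegree]

end MonicOfDegree

/-- The sum of `g u` over the sequences `u` with `u i = 0` for all `i ≥ m`. -/
noncomputable def seqSum {α M : Type*} [Zero α] [Fintype α] [AddCommMonoid M]
    (m : ℕ) (g : (ℕ → α) → M) : M :=
  ∑ v : Fin m → α, g (Function.extend Fin.val v 0)

section SeqSum

variable {α M : Type*} [Zero α] [Fintype α] [AddCommMonoid M]

lemma seqSum_zero (g : (ℕ → α) → M) : seqSum 0 g = g 0 := by
  simp only [seqSum, Fintype.sum_unique]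
  exact congrArg g (funext fun i => Function.extend_apply' _ _ _ fun ⟨j, _⟩ => j.elim0)

lemma seqSum_succ (m : ℕ) (g : (ℕ → α) → M) :
    seqSum (m + 1) g = ∑ x, seqSum m fun u => g fun i => i.casesOn x u := by
  simp only [seqSum]
  rw [← (Fin.consEquiv fun _ => α).sum_comp, Fintype.sum_prod_type]
  refine Finset.sum_congr rfl fun x _ => Finset.sum_congr rfl fun v _ => congrArg g ?_
  funext i
  by_cases hi : i < m + 1
  · refine (Fin.val_injective.extend_apply _ _ (⟨i, hi⟩ : Fin (m + 1))).trans ?_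
    cases i with
    | zero => rfl
    | succ i =>
      exact (Fin.val_injective.extend_apply v _ (⟨i, Nat.lt_of_succ_lt_succ hi⟩ : Fin m)).symm
  · obtain ⟨i, rfl⟩ : ∃ k, i = k + 1 := Nat.exists_eq_succ_of_ne_zero (by omega)
    rw [Function.extend_apply' _ _ _ (by rintro ⟨j, hj⟩; omega)]
    exact (Function.extend_apply' v (0 : ℕ → α) i (by rintro ⟨j, rfl⟩; omega)).symm

end SeqSum

lemma sum_monicOfDegree {R : Type*} [CommRing R] [Nontrivial R] [Fintype R] {M : Type*}
    [AddCommMonoid M] (m : ℕ) (g : (ℕ → R) → M) :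
    ∑ f ∈ monicOfDegree R m, g (fun i => f.reverse.coeff (i + 1)) =
      seqSum m g := by
  have := Fintype.subtype (monicOfDegree R m) fun f => mem_monicOfDegree
  rw [seqSum, ← (monicEquivFun m).sum_comp, Finset.sum_subtype _ (fun f => mem_monicOfDegree)]
  exact Finset.sum_congr rfl fun f _ => congrArg g (funext fun i => (extend_monicEquivFun f i).symm)

section VonMangoldt

open UniqueFactorizationMonoid

variable {F : Type*} [Field F]

open Classical in
/-- The von Mangoldt function of `F[X]`: `deg P` at associates of powers `P ^ k` with `P`
irreducible and `k ≠ 0`, and `0` elsewhere. -/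
noncomputable def polynomialVonMangoldt (f : F[X]) : ℕ :=
  if IsPrimePow f then (radical f).natDegree else 0

lemma polynomialVonMangoldt_pow {P : F[X]} (hP : Irreducible P) {k : ℕ} (hk : k ≠ 0) :
    polynomialVonMangoldt (P ^ k) = P.natDegree := by
  classical
  rw [polynomialVonMangoldt, if_pos (hP.prime.isPrimePow.pow hk), radical_pow_of_prime hP.prime hk,
    natDegree_eq_of_degree_eq degree_normalize]

lemma exists_monic_irreducible_pow_eq {f : F[X]} (hf : f.Monic) (hpow : IsPrimePow f) :
    ∃ (P : F[X]) (k : ℕ), P.Monic ∧ Irreducible P ∧ k ≠ 0 ∧ P ^ k = f := by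
  classical
  obtain ⟨Q, k, hQ, hk, rfl⟩ := hpow
  have hmonic : (normalize Q).Monic := monic_normalize hQ.ne_zero
  exact ⟨normalize Q, k, hmonic, (normalize_associated Q).symm.irreducible hQ.irreducible, hk.ne',
    eq_of_monic_of_associated (hmonic.pow k) hf ((normalize_associated Q).pow_pow)⟩

lemma finite_monic_dvd {f : F[X]} (hf : f ≠ 0) : {g : F[X] | g.Monic ∧ g ∣ f}.Finite :=
  ⟨@Fintype.equivFin _ (fintypeSubtypeMonicDvd f hf)⟩

/-- The finite set of monic divisors of `f ≠ 0`. -/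
noncomputable def monicDivisors (f : F[X]) (hf : f ≠ 0) : Finset F[X] :=
  (finite_monic_dvd hf).toFinset

lemma mem_monicDivisors {f : F[X]} {hf : f ≠ 0} {g : F[X]} :
    g ∈ monicDivisors f hf ↔ g.Monic ∧ g ∣ f := by
  simp [monicDivisors]

lemma eq_pow_succ_of_isPrimePow {P u g : F[X]} (hP : Irreducible P) (hPmonic : P.Monic)
    (hu : ¬P ∣ u) {e : ℕ} (hg : g.Monic) (hpow : IsPrimePow g) (hdvd : g ∣ P ^ (e + 1) * u)
    (hndvd : ¬g ∣ P ^ e * u) : g = P ^ (e + 1) := by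
  obtain ⟨Q, k, hQmonic, hQ, -, rfl⟩ := exists_monic_irreducible_pow_eq hg hpow
  obtain rfl : Q = P := by
    by_contra hne
    have hcoprime : IsCoprime Q P := hQ.coprime_iff_not_dvd.2 fun h =>
      hne (eq_of_monic_of_associated hQmonic hPmonic (hQ.associated_of_dvd hP h))
    exact hndvd (((hcoprime.pow (m := k) (n := e + 1)).dvd_of_dvd_mul_left hdvd).mul_left _)
  have hle : k ≤ e + 1 :=
    (pow_dvd_pow_iff hQ.ne_zero hQ.not_isUnit).1 (hQ.prime.pow_dvd_of_dvd_mul_right k hu hdvd)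
  have hlt : e < k := not_le.1 fun h => hndvd ((pow_dvd_pow Q h).mul_right u)
  rw [le_antisymm hle hlt]

lemma sum_vonMangoldt_pow_succ_mul {P u : F[X]} (hP : Irreducible P) (hPmonic : P.Monic)
    (hu : ¬P ∣ u) {e : ℕ} (hne : P ^ e * u ≠ 0) (hne' : P ^ (e + 1) * u ≠ 0) :
    ∑ g ∈ monicDivisors (P ^ (e + 1) * u) hne', polynomialVonMangoldt g =
      ∑ g ∈ monicDivisors (P ^ e * u) hne, polynomialVonMangoldt g + P.natDegree := by
  classical
  have hmem : P ^ (e + 1) ∉ monicDivisors (P ^ e * u) hne := fun h => by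
    rw [mem_monicDivisors, pow_succ, mul_dvd_mul_iff_left (pow_ne_zero e hP.ne_zero)] at h
    exact hu h.2
  rw [add_comm (∑ _ ∈ _, _), ← polynomialVonMangoldt_pow hP e.succ_ne_zero,
    ← Finset.sum_insert hmem]
  refine (Finset.sum_subset (fun g hg => ?_) fun g hg hg' => ?_).symm
  · rw [mem_monicDivisors]
    rcases Finset.mem_insert.1 hg with rfl | hg
    · exact ⟨hPmonic.pow _, dvd_mul_right _ _⟩
    · rw [mem_monicDivisors] at hg
      exact ⟨hg.1, hg.2.trans (mul_dvd_mul_right (pow_dvd_pow P e.le_succ) u)⟩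
  · rw [Finset.mem_insert, not_or, mem_monicDivisors, not_and] at hg'
    rw [mem_monicDivisors] at hg
    exact if_neg fun hpow => hg'.1
      (eq_pow_succ_of_isPrimePow hP hPmonic hu hg.1 hpow hg.2 (hg'.2 hg.1))

theorem sum_polynomialVonMangoldt_monicDivisors {f : F[X]} (hf : f ≠ 0) :
    ∑ g ∈ monicDivisors f hf, polynomialVonMangoldt g = f.natDegree := by
  induction hn : f.natDegree using Nat.strong_induction_on generalizing f with
  | _ n ih =>
  by_cases hunit : IsUnit f
  · rw [← hn, natDegree_eq_zero_of_isUnit hunit]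
    exact Finset.sum_eq_zero fun g hg =>
      if_neg fun hpow => hpow.not_isUnit (isUnit_of_dvd_unit (mem_monicDivisors.1 hg).2 hunit)
  · obtain ⟨P, hPmonic, hP, h, rfl⟩ := exists_monic_irreducible_factor f hunit
    have hh : h ≠ 0 := right_ne_zero_of_mul hf
    obtain ⟨u, hu, hPu⟩ :=
      (FiniteMultiplicity.of_prime_left hP.prime hh).exists_eq_pow_mul_and_not_dvd
    have hdeg : n = h.natDegree + P.natDegree := by
      rw [← hn, natDegree_mul hP.ne_zero hh, add_comm]
    generalize multiplicity P h = e at hu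
    subst hu
    simp only [← mul_assoc, ← pow_succ'] at hf ⊢
    rw [sum_vonMangoldt_pow_succ_mul hP hPmonic hPu hh hf, hdeg,
      ih _ (by have := hP.natDegree_pos; omega) hh rfl]

end VonMangoldt

section LSeries

open Finset.HasAntidiagonal (antidiagonal mem_antidiagonal)
open scoped PowerSeries

variable {F : Type*} [Field F] [Finite F]

open Classical in
lemma sum_polynomialVonMangoldt_dvd {f : F[X]} {m : ℕ} (hf : f ∈ monicOfDegree F (m + 1)) :
    ∑ p ∈ antidiagonal m, ∑ g ∈ monicOfDegree F (p.1 + 1) with g ∣ f,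
      polynomialVonMangoldt g = m + 1 := by
  obtain ⟨hmonic, hdeg⟩ := mem_monicOfDegree.1 hf
  have hfiber (k : ℕ) : {g ∈ monicDivisors f hmonic.ne_zero | g.natDegree = k} =
      {g ∈ monicOfDegree F k | g ∣ f} := by
    ext g
    simp only [Finset.mem_filter, mem_monicDivisors, mem_monicOfDegree]
    tauto
  have hzero : ∑ g ∈ monicOfDegree F 0 with g ∣ f, polynomialVonMangoldt g = 0 :=
    Finset.sum_eq_zero fun g hg => if_neg fun hpow => hpow.ne_one <| by
      obtain ⟨hg, hg0⟩ := mem_monicOfDegree.1 (Finset.mem_filter.1 hg).1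
      exact hg.natDegree_eq_zero.1 hg0
  have hmaps : ∀ g ∈ monicDivisors f hmonic.ne_zero, g.natDegree ∈ Finset.range (m + 2) :=
    fun g hg => Finset.mem_range_succ_iff.2 <|
      (natDegree_le_of_dvd (mem_monicDivisors.1 hg).2 hmonic.ne_zero).trans hdeg.le
  rw [Finset.Nat.sum_antidiagonal_eq_sum_range_succ_mk, ← hdeg,
    ← sum_polynomialVonMangoldt_monicDivisors hmonic.ne_zero,
    ← Finset.sum_fiberwise_of_maps_to hmaps, Finset.sum_range_succ' _ (m + 1)]
  simp only [hfiber, hzero, add_zero]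

variable {R : Type*} [CommRing R]

open Classical in
lemma sum_monicOfDegree_filter_dvd {c : F[X] → R}
    (hc : ∀ f g, f.Monic → g.Monic → c (f * g) = c f * c g) {i j : ℕ} {g : F[X]}
    (hg : g ∈ monicOfDegree F i) :
    ∑ f ∈ monicOfDegree F (i + j) with g ∣ f, c f = c g * ∑ h ∈ monicOfDegree F j, c h := by
  obtain ⟨hmonic, rfl⟩ := mem_monicOfDegree.1 hg
  rw [Finset.mul_sum]
  symm
  refine Finset.sum_bij (fun h _ => g * h) (fun h hh => ?_)
    (fun _ _ _ _ heq => mul_left_cancel₀ hmonic.ne_zero heq) (fun f hf => ?_)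
    fun h hh => (hc g h hmonic (mem_monicOfDegree.1 hh).1).symm
  · obtain ⟨hhmonic, rfl⟩ := mem_monicOfDegree.1 hh
    simp only [Finset.mem_filter, mem_monicOfDegree]
    exact ⟨⟨hmonic.mul hhmonic, hmonic.natDegree_mul hhmonic⟩, dvd_mul_right g h⟩
  · simp only [Finset.mem_filter, mem_monicOfDegree] at hf
    obtain ⟨⟨hf, hdeg⟩, h, rfl⟩ := hf
    have hh : h.Monic := hmonic.of_mul_monic_left hf
    rw [hmonic.natDegree_mul hh, Nat.add_left_cancel_iff] at hdeg
    exact ⟨h, mem_monicOfDegree.2 ⟨hh, hdeg⟩, rfl⟩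

/-- The L-series `∑ c(f) X ^ deg f` of a function `c` on monic polynomials over a finite field. -/
noncomputable def lSeries (c : F[X] → R) : R⟦X⟧ :=
  PowerSeries.mk fun m => ∑ f ∈ monicOfDegree F m, c f

/-- The series `∑ Λ(f) c(f) X ^ (deg f - 1)`, the logarithmic derivative of `lSeries c` when `c` is
multiplicative. -/
noncomputable def mangoldtSeries (c : F[X] → R) : R⟦X⟧ :=
  PowerSeries.mk fun m => ∑ f ∈ monicOfDegree F (m + 1), polynomialVonMangoldt f * c f

theorem derivative_lSeries {c : F[X] → R}
    (hc : ∀ f g, f.Monic → g.Monic → c (f * g) = c f * c g) :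
    d⁄dX R (lSeries c) = mangoldtSeries c * lSeries c := by
  classical
  ext m
  simp only [PowerSeries.coeff_derivative, PowerSeries.coeff_mul, lSeries, mangoldtSeries,
    PowerSeries.coeff_mk]
  calc (∑ f ∈ monicOfDegree F (m + 1), c f) * (m + 1)
      = ∑ f ∈ monicOfDegree F (m + 1), ∑ p ∈ antidiagonal m,
          ∑ g ∈ monicOfDegree F (p.1 + 1) with g ∣ f, polynomialVonMangoldt g * c f := by
        rw [Finset.sum_mul]
        refine Finset.sum_congr rfl fun f hf => ?_
        rw [← Nat.cast_add_one, ← sum_polynomialVonMangoldt_dvd hf, mul_comm]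
        simp only [Nat.cast_sum, Finset.sum_mul]
    _ = ∑ p ∈ antidiagonal m, ∑ g ∈ monicOfDegree F (p.1 + 1),
          ∑ f ∈ monicOfDegree F (m + 1) with g ∣ f, polynomialVonMangoldt g * c f := by
        rw [Finset.sum_comm]
        simp only [Finset.sum_filter]
        exact Finset.sum_congr rfl fun p _ => Finset.sum_comm
    _ = ∑ p ∈ antidiagonal m,
          (∑ g ∈ monicOfDegree F (p.1 + 1), polynomialVonMangoldt g * c g) *
            ∑ h ∈ monicOfDegree F p.2, c h := by
        refine Finset.sum_congr rfl fun p hp => ?_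
        rw [Finset.sum_mul]
        refine Finset.sum_congr rfl fun g hg => ?_
        rw [← Finset.mul_sum, ← mem_antidiagonal.1 hp, add_right_comm,
          sum_monicOfDegree_filter_dvd hc hg, mul_assoc]

theorem sum_vonMangoldt_mul_eq_neg_rootPowerSum [IsDomain R] {c : F[X] → R}
    (hc : ∀ f g, f.Monic → g.Monic → c (f * g) = c f * c g) {p : R[X]} (hmonic : p.Monic)
    (hsplits : p.Splits) (hp : lSeries c = p.reverse) {n : ℕ} (hn : n ≠ 0) :
    ∑ f ∈ monicOfDegree F n, polynomialVonMangoldt f * c f = -rootPowerSum n p := by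
  have hne : (p.reverse : R⟦X⟧) ≠ 0 := by simpa using hmonic.ne_zero
  have hlog : mangoldtSeries c = -newtonSeries p := mul_right_cancel₀ hne <| by
    rw [← derivative_reverse_of_splits hmonic hsplits, ← hp, derivative_lSeries hc]
  obtain ⟨k, rfl⟩ := Nat.exists_eq_succ_of_ne_zero hn
  simpa [mangoldtSeries, newtonSeries] using congrArg (PowerSeries.coeff k) hlog

end LSeries

section FieldPolynomial

variable (F : Type*) [Field F] {K : Type*} [Field K] [Algebra F K]

/-- The characteristic polynomial over `F` of an element `a` of a finite extension `K` of `F`,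
written as a power of the minimal polynomial. -/
noncomputable def fieldPolynomial (a : K) : F[X] :=
  minpoly F a ^ (Module.finrank F K / (minpoly F a).natDegree)

lemma finrank_div_natDegree_minpoly_ne_zero [FiniteDimensional F K] (a : K) :
    Module.finrank F K / (minpoly F a).natDegree ≠ 0 :=
  Nat.div_ne_zero_iff.2 ⟨(minpoly.natDegree_pos (.of_finite F a)).ne', minpoly.natDegree_le a⟩

lemma isPrimePow_fieldPolynomial [FiniteDimensional F K] (a : K) :
    IsPrimePow (fieldPolynomial F a) :=
  (minpoly.irreducible (.of_finite F a)).prime.isPrimePow.pow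
    (finrank_div_natDegree_minpoly_ne_zero F a)

lemma natDegree_fieldPolynomial [FiniteDimensional F K] (a : K) :
    (fieldPolynomial F a).natDegree = Module.finrank F K := by
  rw [fieldPolynomial, natDegree_pow, Nat.div_mul_cancel (minpoly.degree_dvd (.of_finite F a))]

lemma fieldPolynomial_mem_monicOfDegree [Finite F] [FiniteDimensional F K] (a : K) :
    fieldPolynomial F a ∈ monicOfDegree F (Module.finrank F K) :=
  mem_monicOfDegree.2
    ⟨(minpoly.monic (.of_finite F a)).pow _, natDegree_fieldPolynomial F a⟩

variable {F} in
lemma fieldPolynomial_eq_pow_iff [FiniteDimensional F K] {P : F[X]} (hmonic : P.Monic)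
    (hP : Irreducible P) {k : ℕ} (hdeg : P.natDegree * k = Module.finrank F K) {a : K} :
    fieldPolynomial F a = P ^ k ↔ aeval a P = 0 := by
  constructor
  · intro h
    have hdvd : minpoly F a ∣ P ^ k :=
      h ▸ dvd_pow_self _ (finrank_div_natDegree_minpoly_ne_zero F a)
    exact minpoly.dvd_iff.1
      ((minpoly.irreducible (.of_finite F a)).prime.dvd_of_dvd_pow hdvd)
  · intro h
    rw [fieldPolynomial, ← minpoly.eq_of_irreducible_of_monic hP h hmonic, ← hdeg,
      Nat.mul_div_cancel_left k hP.natDegree_pos]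

variable [Fintype F]

lemma frobeniusAlgHom_pow_apply (a : K) (i : ℕ) :
    (FiniteField.frobeniusAlgHom F K ^ i) a = a ^ Fintype.card F ^ i := by
  rw [AlgHom.coe_pow, FiniteField.coe_frobeniusAlgHom, pow_iterate]

lemma pow_card_pow_injective (i : ℕ) : Function.Injective fun a : K => a ^ Fintype.card F ^ i := by
  intro a b hab
  simp only [← frobeniusAlgHom_pow_apply] at hab
  exact (FiniteField.frobeniusAlgHom F K ^ i).injective hab

variable [Finite K]

lemma natDegree_minpoly_dvd_iff (a : K) (j : ℕ) :
    (minpoly F a).natDegree ∣ j ↔ a ^ Fintype.card F ^ j = a := by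
  rw [(minpoly.irreducible (.of_finite F a)).natDegree_dvd_iff_dvd_X_pow_card_pow_sub_X,
    minpoly.dvd_iff]
  simp [sub_eq_zero]

lemma injOn_conjugates (a : K) :
    Set.InjOn (fun i => a ^ Fintype.card F ^ i) (Finset.range (minpoly F a).natDegree) := by
  have hlt {i j : ℕ} (hij : i < j) (hj : j < (minpoly F a).natDegree) :
      a ^ Fintype.card F ^ i ≠ a ^ Fintype.card F ^ j := fun h => by
    have hfix : a ^ Fintype.card F ^ (j - i) = a := pow_card_pow_injective F i <| by
      simp only [← pow_mul, ← pow_add, Nat.sub_add_cancel hij.le, h]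
    have := Nat.le_of_dvd (by omega) ((natDegree_minpoly_dvd_iff F a _).2 hfix)
    omega
  intro i hi j hj h
  simp only [Finset.coe_range, Set.mem_Iio] at hi hj
  by_contra hne
  rcases lt_or_gt_of_ne hne with hij | hij
  · exact hlt hij hj h
  · exact hlt hij hi h.symm

theorem map_minpoly_eq_prod_conjugates (a : K) :
    (minpoly F a).map (algebraMap F K) =
      ∏ i ∈ Finset.range (minpoly F a).natDegree, (X - C (a ^ Fintype.card F ^ i)) := by
  refine eq_of_monic_of_dvd_of_natDegree_le (monic_prod_X_sub_C _ _)
    ((minpoly.monic (.of_finite F a)).map _) ?_ ?_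
  · refine Finset.prod_dvd_of_coprime (fun i hi j hj hij => ?_) fun i _ => ?_
    · exact pairwise_coprime_X_sub_C Function.injective_id
        fun h => hij (injOn_conjugates F a hi hj h)
    · rw [dvd_iff_isRoot, IsRoot, eval_map_algebraMap, ← frobeniusAlgHom_pow_apply,
        aeval_algHom_apply, minpoly.aeval, map_zero]
  · rw [natDegree_prod_of_monic _ _ fun i _ => monic_X_sub_C _]
    simp only [natDegree_map, natDegree_X_sub_C]
    simp

theorem map_minpoly_pow_eq_prod_conjugates (a : K) (e : ℕ) :
    (minpoly F a ^ e).map (algebraMap F K) =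
      ∏ i ∈ Finset.range ((minpoly F a).natDegree * e), (X - C (a ^ Fintype.card F ^ i)) := by
  induction e with
  | zero => simp
  | succ e ih =>
    rw [pow_succ, Polynomial.map_mul, ih, Nat.mul_succ, Finset.prod_range_add,
      map_minpoly_eq_prod_conjugates]
    simp only [pow_add, pow_mul a, (natDegree_minpoly_dvd_iff F a _).1 (dvd_mul_right _ e)]

theorem algebraMap_coeff_reverse_fieldPolynomial (a : K) (k : ℕ) :
    algebraMap F K ((fieldPolynomial F a).reverse.coeff k) =
      (-1) ^ k * traceFn (Fintype.card F) (Module.finrank F K) k a := by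
  rcases le_or_gt k (Module.finrank F K) with hk | hk
  · have hsum := Finset.prod_X_add_C_coeff (Finset.range (Module.finrank F K))
      (fun i => -a ^ Fintype.card F ^ i) (k := Module.finrank F K - k) (by simp)
    simp only [C_neg, ← sub_eq_add_neg, Finset.card_range, Nat.sub_sub_self hk] at hsum
    rw [coeff_reverse, natDegree_fieldPolynomial, revAt_le hk, ← coeff_map, fieldPolynomial,
      map_minpoly_pow_eq_prod_conjugates,
      Nat.mul_div_cancel' (minpoly.degree_dvd (.of_finite F a)), hsum, traceFn, Finset.mul_sum]
    refine Finset.sum_congr rfl fun S hS => ?_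
    rw [Finset.prod_neg, (Finset.mem_powersetCard.1 hS).2]
  · have hdeg : (fieldPolynomial F a).reverse.natDegree < k :=
      (reverse_natDegree_le _).trans_lt (by rwa [natDegree_fieldPolynomial])
    rw [coeff_eq_zero_of_natDegree_lt hdeg, traceFn, Finset.powersetCard_eq_empty.2 (by simpa),
      map_zero, Finset.sum_empty, mul_zero]

end FieldPolynomial

section CardFieldPolynomial

variable {F K : Type*} [Field F] [Field K] [Algebra F K] [Finite F]

lemma card_rootSet_of_natDegree_dvd_finrank [Finite K] {P : F[X]} (hP : Irreducible P)
    (hdeg : P.natDegree ∣ Module.finrank F K) : Nat.card (P.rootSet K) = P.natDegree := by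
  have := Fintype.ofFinite F
  have := Fintype.ofFinite K
  have hsplits : (P.map (algebraMap F K)).Splits := by
    rw [hP.natDegree_dvd_iff_dvd_X_pow_card_pow_sub_X, Nat.card_eq_fintype_card,
      ← Module.card_eq_pow_finrank] at hdeg
    refine (FiniteField.isSplittingField_sub K F).splits.of_dvd ?_ (map_dvd (algebraMap F K) hdeg)
    exact map_ne_zero (FiniteField.X_pow_card_sub_X_ne_zero F Fintype.one_lt_card)
  rw [Nat.card_eq_fintype_card]
  exact card_rootSet_eq_natDegree (PerfectField.separable_of_irreducible hP) hsplits

theorem card_fieldPolynomial_eq [Finite K] {f : F[X]}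
    (hf : f ∈ monicOfDegree F (Module.finrank F K)) :
    Nat.card {a : K // fieldPolynomial F a = f} = polynomialVonMangoldt f := by
  obtain ⟨hmonic, hdeg⟩ := mem_monicOfDegree.1 hf
  by_cases hpow : IsPrimePow f
  · obtain ⟨P, k, hPmonic, hP, hk, rfl⟩ := exists_monic_irreducible_pow_eq hmonic hpow
    rw [natDegree_pow, mul_comm] at hdeg
    rw [polynomialVonMangoldt_pow hP hk,
      ← card_rootSet_of_natDegree_dvd_finrank hP (Dvd.intro k hdeg)]
    refine Nat.card_congr (Equiv.subtypeEquivRight fun a => ?_)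
    rw [fieldPolynomial_eq_pow_iff hPmonic hP hdeg, mem_rootSet_of_ne hP.ne_zero]
  · have : IsEmpty {a : K // fieldPolynomial F a = f} :=
      ⟨fun a => hpow (a.2 ▸ isPrimePow_fieldPolynomial F a.1)⟩
    rw [Nat.card_of_isEmpty, polynomialVonMangoldt, if_neg hpow]

theorem sum_fieldPolynomial [Fintype K] {R : Type*} [CommRing R] (c : F[X] → R) :
    ∑ a : K, c (fieldPolynomial F a) =
      ∑ f ∈ monicOfDegree F (Module.finrank F K), polynomialVonMangoldt f * c f := by
  classical
  rw [← Finset.sum_fiberwise_of_maps_to' fun a _ => fieldPolynomial_mem_monicOfDegree F a]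
  refine Finset.sum_congr rfl fun f hf => ?_
  rw [Finset.sum_const, nsmul_eq_mul, ← card_fieldPolynomial_eq hf, Nat.card_eq_fintype_card,
    Fintype.card_subtype]

end CardFieldPolynomial

section TruncatedReverse

/-- The group of units `1 + a x + b x² + c x³ + d x⁴` of `𝔽₂[x]/(x⁵)` is the product of the cyclic
groups of orders `8` and `2` generated by `1 + x` and `1 + x³`; this is the discrete logarithm. -/
def coeffLog (a b c d : ZMod 2) : ZMod 8 × ZMod 2 :=
  ((a.val + 2 * b.val + 4 * (d + a * c + a * b).val : ℕ), c + a * b)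

lemma coeffLog_add_coeffLog (a b c d a' b' c' d' : ZMod 2) :
    coeffLog a b c d + coeffLog a' b' c' d' =
      coeffLog (a + a') (b + a * a' + b') (c + b * a' + a * b' + c')
        (d + c * a' + b * b' + a * c' + d') := by
  revert a b c d a' b' c' d'
  decide +kernel

lemma coeffLog_bijective : Function.Bijective fun v : ZMod 2 × ZMod 2 × ZMod 2 × ZMod 2 =>
    coeffLog v.1 v.2.1 v.2.2.1 v.2.2.2 := by
  decide +kernel

lemma coeffLog_zero_zero (c d : ZMod 2) : coeffLog 0 0 c d = (4 * (d.val : ZMod 8), c) := by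
  revert c d
  decide

/-- The discrete logarithm of the class modulo `x⁵` of the reversal of a monic polynomial. -/
noncomputable def revLog (f : (ZMod 2)[X]) : ZMod 8 × ZMod 2 :=
  coeffLog (f.reverse.coeff 1) (f.reverse.coeff 2) (f.reverse.coeff 3) (f.reverse.coeff 4)

lemma revLog_mul {f g : (ZMod 2)[X]} (hf : f.Monic) (hg : g.Monic) :
    revLog (f * g) = revLog f + revLog g := by
  have hf0 : f.reverse.coeff 0 = 1 := by rw [coeff_zero_reverse, hf]
  have hg0 : g.reverse.coeff 0 = 1 := by rw [coeff_zero_reverse, hg]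
  simp only [revLog, coeffLog_add_coeffLog, reverse_mul_of_domain, coeff_mul,
    Finset.Nat.sum_antidiagonal_eq_sum_range_succ_mk, Finset.sum_range_succ,
    Finset.sum_range_zero, hf0, hg0]
  congr 1 <;> ring

end TruncatedReverse

section LPolynomial

open scoped PowerSeries

variable {R : Type*} [CommRing R]

/-- The L-polynomial, reversed, of a nontrivial character of `ZMod 8 × ZMod 2` with values `w` and
`s` at the two generators. -/
noncomputable def lPolynomial (w s : R) : R[X] :=
  Cubic.toPoly ⟨1, 1 + w, 1 + w + w ^ 2 + w ^ 7 * s,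
    1 + w + w ^ 2 + w ^ 3 + s + w ^ 2 * s + w ^ 5 * s + w ^ 7 * s⟩

lemma lPolynomial_monic (w s : R) : (lPolynomial w s).Monic :=
  Cubic.monic_of_a_eq_one rfl

lemma natDegree_lPolynomial [Nontrivial R] (w s : R) : (lPolynomial w s).natDegree = 3 :=
  Cubic.natDegree_of_a_ne_zero one_ne_zero

lemma sum_zmod_two {M : Type*} [AddCommMonoid M] (f : ZMod 2 → M) : ∑ x, f x = f 0 + f 1 :=
  Fin.sum_univ_two f

lemma sum_monicOfDegree_addChar_revLog (ψ : AddChar (ZMod 8 × ZMod 2) R) (m : ℕ) :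
    ∑ f ∈ monicOfDegree (ZMod 2) m, ψ (revLog f) =
      seqSum m fun u => ψ (coeffLog (u 0) (u 1) (u 2) (u 3)) :=
  sum_monicOfDegree m fun u => ψ (coeffLog (u 0) (u 1) (u 2) (u 3))

lemma sum_monicOfDegree_addChar_revLog_eq_zero [IsDomain R] {ψ : AddChar (ZMod 8 × ZMod 2) R}
    (hψ : ψ ≠ 1) (m : ℕ) : ∑ f ∈ monicOfDegree (ZMod 2) (m + 4), ψ (revLog f) = 0 := by
  simp only [sum_monicOfDegree_addChar_revLog, seqSum_succ]
  simp only [seqSum, ← Finset.sum_comm (s := (Finset.univ : Finset (Fin m → ZMod 2)))]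
  refine Finset.sum_eq_zero fun _ _ => ?_
  rw [← AddChar.sum_eq_zero_of_ne_one hψ, ← coeffLog_bijective.sum_comp]
  simp only [Fintype.sum_prod_type]
  rfl

lemma addChar_coeffLog (ψ : AddChar (ZMod 8 × ZMod 2) R) {a b c d : ZMod 2} (k l : ℕ)
    (h : coeffLog a b c d = ((k : ZMod 8), (l : ZMod 2))) :
    ψ (coeffLog a b c d) = ψ (1, 0) ^ k * ψ (0, 1) ^ l := by
  rw [← AddChar.map_nsmul_eq_pow, ← AddChar.map_nsmul_eq_pow, ← AddChar.map_add_eq_mul, h]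
  simp

theorem lSeries_revLog [IsDomain R] {ψ : AddChar (ZMod 8 × ZMod 2) R} (hψ : ψ ≠ 1) :
    lSeries (fun f => ψ (revLog f)) = (lPolynomial (ψ (1, 0)) (ψ (0, 1))).reverse := by
  ext m
  rw [lSeries, PowerSeries.coeff_mk, coeff_coe, coeff_reverse, natDegree_lPolynomial, lPolynomial]
  rcases m with _ | _ | _ | _ | m
  · rw [revAt_le (by omega), Cubic.coeff_eq_a, sum_monicOfDegree_addChar_revLog, seqSum_zero]
    exact ψ.map_zero_eq_one
  · rw [revAt_le (by omega), Cubic.coeff_eq_b, sum_monicOfDegree_addChar_revLog]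
    simp only [seqSum_zero, seqSum_succ, sum_zmod_two]
    change ψ (coeffLog 0 0 0 0) + ψ (coeffLog 1 0 0 0) = _
    rw [addChar_coeffLog ψ 0 0 rfl, addChar_coeffLog ψ 1 0 rfl]
    ring
  · rw [revAt_le (by omega), Cubic.coeff_eq_c, sum_monicOfDegree_addChar_revLog]
    simp only [seqSum_zero, seqSum_succ, sum_zmod_two]
    change ψ (coeffLog 0 0 0 0) + ψ (coeffLog 0 1 0 0) +
      (ψ (coeffLog 1 0 0 0) + ψ (coeffLog 1 1 0 0)) = _
    rw [addChar_coeffLog ψ 0 0 rfl, addChar_coeffLog ψ 2 0 rfl, addChar_coeffLog ψ 1 0 rfl,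
      addChar_coeffLog ψ 7 1 rfl]
    ring
  · rw [revAt_le (by omega), Cubic.coeff_eq_d, sum_monicOfDegree_addChar_revLog]
    simp only [seqSum_zero, seqSum_succ, sum_zmod_two]
    change ψ (coeffLog 0 0 0 0) + ψ (coeffLog 0 0 1 0) +
        (ψ (coeffLog 0 1 0 0) + ψ (coeffLog 0 1 1 0)) +
      (ψ (coeffLog 1 0 0 0) + ψ (coeffLog 1 0 1 0) +
        (ψ (coeffLog 1 1 0 0) + ψ (coeffLog 1 1 1 0))) = _
    rw [addChar_coeffLog ψ 0 0 rfl, addChar_coeffLog ψ 0 1 rfl, addChar_coeffLog ψ 2 0 rfl,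
      addChar_coeffLog ψ 2 1 rfl, addChar_coeffLog ψ 1 0 rfl, addChar_coeffLog ψ 5 1 rfl,
      addChar_coeffLog ψ 7 1 rfl, addChar_coeffLog ψ 3 0 rfl]
    ring
  · rw [sum_monicOfDegree_addChar_revLog_eq_zero hψ, revAt_eq_self_of_lt (by omega),
      Cubic.coeff_eq_zero (by omega)]

end LPolynomial

section Products

variable {R : Type*} [CommRing R]

lemma lPolynomial_of_pow_four_eq_one {w : R} (hw : w ^ 4 = 1) (s : R) :
    lPolynomial w s = Cubic.toPoly ⟨1, 1 + w, 1 + w + w ^ 2 + w ^ 3 * s,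
      (1 + w + w ^ 2 + w ^ 3) * (1 + s)⟩ := by
  rw [lPolynomial]
  congr 2 <;> grind

lemma lPolynomial_of_pow_four_eq_neg_one {w : R} (hw : w ^ 4 = -1) (s : R) :
    lPolynomial w s = Cubic.toPoly ⟨1, 1 + w, 1 + w + w ^ 2 - w ^ 3 * s,
      1 + w + w ^ 2 + w ^ 3 + (1 - w + w ^ 2 - w ^ 3) * s⟩ := by
  rw [lPolynomial]
  congr 2 <;> grind

variable {z : R}

lemma prod_lPolynomial_even_one (hz : z ^ 4 = -1) :
    lPolynomial (z ^ 2) 1 * lPolynomial (z ^ 4) 1 * lPolynomial (z ^ 6) 1 =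
      X ^ 7 * d21.map (Int.castRingHom R) := by
  have hC : C z ^ 4 = -1 := by rw [← C_pow, hz, C_neg, C_1]
  rw [lPolynomial_of_pow_four_eq_one (by grind), lPolynomial_of_pow_four_eq_one (by grind),
    lPolynomial_of_pow_four_eq_one (by grind)]
  simp only [Cubic.toPoly, d21, map_add, map_mul, map_pow, map_one,
    Polynomial.map_add, Polynomial.map_mul, Polynomial.map_pow, map_X, Polynomial.map_ofNat]
  grind

lemma prod_lPolynomial_even_neg_one (hz : z ^ 4 = -1) :
    lPolynomial 1 (-1) * lPolynomial (z ^ 2) (-1) * lPolynomial (z ^ 4) (-1) *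
        lPolynomial (z ^ 6) (-1) =
      X ^ 4 * (d21 * d22 * d41).map (Int.castRingHom R) := by
  have hC : C z ^ 4 = -1 := by rw [← C_pow, hz, C_neg, C_1]
  rw [lPolynomial_of_pow_four_eq_one (one_pow 4), lPolynomial_of_pow_four_eq_one (by grind),
    lPolynomial_of_pow_four_eq_one (by grind), lPolynomial_of_pow_four_eq_one (by grind)]
  simp only [Cubic.toPoly, d21, d22, d41, map_add, map_mul, map_neg, map_pow, map_one,
    Polynomial.map_add, Polynomial.map_mul, Polynomial.map_pow, map_X, Polynomial.map_ofNat]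
  grind

lemma lPolynomial_mul_lPolynomial_neg {w : R} (hw : w ^ 4 = -1) (s : R) :
    lPolynomial w s * lPolynomial (-w) s =
      (X ^ 3 + X ^ 2 + C (1 + w ^ 2) * X + C ((1 + w ^ 2) * (1 + s))) ^ 2 -
        C (w ^ 2) * (X ^ 2 + C (1 - w ^ 2 * s) * X + C ((1 + w ^ 2) * (1 - s))) ^ 2 := by
  rw [lPolynomial_of_pow_four_eq_neg_one hw,
    lPolynomial_of_pow_four_eq_neg_one ((Even.neg_pow (by decide) w).trans hw)]
  simp only [Cubic.toPoly, map_add, map_sub, map_neg, map_mul, map_pow, map_one]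
  ring

lemma prod_lPolynomial_odd (hz : z ^ 4 = -1) (s : R) :
    lPolynomial z s * lPolynomial (z ^ 3) s * lPolynomial (z ^ 5) s * lPolynomial (z ^ 7) s =
      ((X ^ 3 + X ^ 2 + C (1 + z ^ 2) * X + C ((1 + z ^ 2) * (1 + s))) ^ 2 -
        C (z ^ 2) * (X ^ 2 + C (1 - z ^ 2 * s) * X + C ((1 + z ^ 2) * (1 - s))) ^ 2) *
      ((X ^ 3 + X ^ 2 + C (1 - z ^ 2) * X + C ((1 - z ^ 2) * (1 + s))) ^ 2 +
        C (z ^ 2) * (X ^ 2 + C (1 + z ^ 2 * s) * X + C ((1 - z ^ 2) * (1 - s))) ^ 2) := by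
  have h5 : z ^ 5 = -z := by grind
  have h6 : (z ^ 3) ^ 2 = -z ^ 2 := by grind
  have h7 : z ^ 7 = -z ^ 3 := by grind
  rw [h5, h7, mul_right_comm (lPolynomial z s), mul_assoc,
    lPolynomial_mul_lPolynomial_neg hz, lPolynomial_mul_lPolynomial_neg (by grind), h6]
  simp only [map_add, map_sub, map_neg, map_mul, map_pow, map_one]
  ring

lemma prod_lPolynomial_odd_one (hz : z ^ 4 = -1) :
    lPolynomial z 1 * lPolynomial (z ^ 3) 1 * lPolynomial (z ^ 5) 1 * lPolynomial (z ^ 7) 1 =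
      (d22 ^ 2 * d81).map (Int.castRingHom R) := by
  have hC : C z ^ 4 = -1 := by rw [← C_pow, hz, C_neg, C_1]
  rw [prod_lPolynomial_odd hz]
  simp only [d22, d81, map_add, map_sub, map_mul, map_pow, map_one,
    Polynomial.map_add, Polynomial.map_mul, Polynomial.map_pow, map_X, Polynomial.map_ofNat]
  grind

lemma prod_lPolynomial_odd_neg_one (hz : z ^ 4 = -1) :
    lPolynomial z (-1) * lPolynomial (z ^ 3) (-1) * lPolynomial (z ^ 5) (-1) *
        lPolynomial (z ^ 7) (-1) =
      (d21 ^ 2 * d82).map (Int.castRingHom R) := by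
  have hC : C z ^ 4 = -1 := by rw [← C_pow, hz, C_neg, C_1]
  rw [prod_lPolynomial_odd hz]
  simp only [d21, d82, map_add, map_sub, map_mul, map_neg, map_pow, map_one,
    Polynomial.map_add, Polynomial.map_mul, Polynomial.map_pow, map_X, Polynomial.map_ofNat]
  grind

end Products

section RootSums

lemma rho_mul (n : ℕ) {p q : ℤ[X]} (hpq : p * q ≠ 0) : rho n (p * q) = rho n p + rho n q := by
  rw [rho, Polynomial.map_mul]
  refine rootPowerSum_mul n ?_
  rwa [← Polynomial.map_mul, Polynomial.map_ne_zero_iff (RingHom.injective_int _)]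

lemma rho_pow (n : ℕ) (p : ℤ[X]) (k : ℕ) : rho n (p ^ k) = k * rho n p := by
  rw [rho, Polynomial.map_pow]
  exact rootPowerSum_pow n _ k

lemma d21_ne_zero : d21 ≠ 0 :=
  Monic.ne_zero (by rw [d21]; monicity!)

lemma d22_ne_zero : d22 ≠ 0 :=
  Monic.ne_zero (by rw [d22]; monicity!)

lemma d41_ne_zero : d41 ≠ 0 :=
  Monic.ne_zero (by rw [d41]; monicity!)

lemma d81_ne_zero : d81 ≠ 0 :=
  Monic.ne_zero (by rw [d81]; monicity!)

lemma d82_ne_zero : d82 ≠ 0 :=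
  Monic.ne_zero (by rw [d82]; monicity!)

lemma rootPowerSum_X_pow_mul_map {n : ℕ} (hn : n ≠ 0) (k : ℕ) {p : ℤ[X]} (hp : p ≠ 0) :
    rootPowerSum n (X ^ k * p.map (Int.castRingHom ℂ)) = rho n p := by
  rw [rootPowerSum_mul n (mul_ne_zero (pow_ne_zero k X_ne_zero)
      ((Polynomial.map_ne_zero_iff (RingHom.injective_int _)).2 hp)),
    rootPowerSum_pow, rootPowerSum_X hn, mul_zero, zero_add]
  rfl

lemma lPolynomial_ne_zero {R : Type*} [CommRing R] [Nontrivial R] (w s : R) :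
    lPolynomial w s ≠ 0 :=
  (lPolynomial_monic w s).ne_zero

variable {z : ℂ} {n : ℕ}

lemma sum_rootPowerSum_lPolynomial_even_one (hn : n ≠ 0) (hz : z ^ 4 = -1) :
    rootPowerSum n (lPolynomial (z ^ 2) 1) + rootPowerSum n (lPolynomial (z ^ 4) 1) +
      rootPowerSum n (lPolynomial (z ^ 6) 1) = rho n d21 := by
  rw [← rootPowerSum_X_pow_mul_map hn 7 d21_ne_zero, ← prod_lPolynomial_even_one hz]
  simp [rootPowerSum_mul, lPolynomial_ne_zero]

lemma sum_rootPowerSum_lPolynomial_even_neg_one (hn : n ≠ 0) (hz : z ^ 4 = -1) :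
    rootPowerSum n (lPolynomial 1 (-1)) + rootPowerSum n (lPolynomial (z ^ 2) (-1)) +
        rootPowerSum n (lPolynomial (z ^ 4) (-1)) + rootPowerSum n (lPolynomial (z ^ 6) (-1)) =
      rho n d21 + rho n d22 + rho n d41 := by
  have hmul : d21 * d22 ≠ 0 := mul_ne_zero d21_ne_zero d22_ne_zero
  have hmul' : d21 * d22 * d41 ≠ 0 := mul_ne_zero hmul d41_ne_zero
  rw [← rho_mul n hmul, ← rho_mul n hmul', ← rootPowerSum_X_pow_mul_map hn 4 hmul',
    ← prod_lPolynomial_even_neg_one hz]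
  simp [rootPowerSum_mul, lPolynomial_ne_zero]

lemma sum_rootPowerSum_lPolynomial_odd_one (n : ℕ) (hz : z ^ 4 = -1) :
    rootPowerSum n (lPolynomial z 1) + rootPowerSum n (lPolynomial (z ^ 3) 1) +
        rootPowerSum n (lPolynomial (z ^ 5) 1) + rootPowerSum n (lPolynomial (z ^ 7) 1) =
      2 * rho n d22 + rho n d81 := by
  trans rho n (d22 ^ 2 * d81)
  · change _ = rootPowerSum n _
    rw [← prod_lPolynomial_odd_one hz]
    simp [rootPowerSum_mul, lPolynomial_ne_zero]
  · rw [rho_mul n (mul_ne_zero (pow_ne_zero 2 d22_ne_zero) d81_ne_zero), rho_pow, Nat.cast_ofNat]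

lemma sum_rootPowerSum_lPolynomial_odd_neg_one (n : ℕ) (hz : z ^ 4 = -1) :
    rootPowerSum n (lPolynomial z (-1)) + rootPowerSum n (lPolynomial (z ^ 3) (-1)) +
        rootPowerSum n (lPolynomial (z ^ 5) (-1)) + rootPowerSum n (lPolynomial (z ^ 7) (-1)) =
      2 * rho n d21 + rho n d82 := by
  trans rho n (d21 ^ 2 * d82)
  · change _ = rootPowerSum n _
    rw [← prod_lPolynomial_odd_neg_one hz]
    simp [rootPowerSum_mul, lPolynomial_ne_zero]
  · rw [rho_mul n (mul_ne_zero (pow_ne_zero 2 d21_ne_zero) d82_ne_zero), rho_pow, Nat.cast_ofNat]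

end RootSums

section Orthogonality

theorem card_mul_card_filter_eq_sum_addChar {R S α : Type*} [CommRing R] [Fintype R]
    [DecidableEq R] [CommRing S] [IsDomain S] {ψ : AddChar R S} (hψ : ψ.IsPrimitive)
    (s : Finset α) (g : α → R) (x : R) :
    (Fintype.card R * (s.filter fun a => g a = x).card : S) =
      ∑ t, ψ (-(t * x)) * ∑ a ∈ s, ψ.mulShift t (g a) := by
  have hterm (a : α) : ∑ t, ψ (-(t * x)) * ψ.mulShift t (g a) =
      if g a = x then (Fintype.card R : S) else 0 := by
    simp only [AddChar.mulShift_apply, ← AddChar.map_add_eq_mul, neg_add_eq_sub, ← mul_sub,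
      AddChar.sum_mulShift (g a - x) hψ, sub_eq_zero, Nat.cast_ite, Nat.cast_zero]
  simp only [Finset.mul_sum]
  rw [Finset.sum_comm, Finset.sum_congr rfl fun a _ => hterm a, ← Finset.sum_filter,
    Finset.sum_const, nsmul_eq_mul, mul_comm]

variable {A B M : Type*} [CommRing A] [CommRing B] [CommMonoid M]

/-- The character `(a, b) ↦ φ a * χ b` of a product of two rings. -/
def prodAddChar (φ : AddChar A M) (χ : AddChar B M) : AddChar (A × B) M :=
  φ.compAddMonoidHom (AddMonoidHom.fst A B) * χ.compAddMonoidHom (AddMonoidHom.snd A B)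

lemma prodAddChar_apply (φ : AddChar A M) (χ : AddChar B M) (x : A × B) :
    prodAddChar φ χ x = φ x.1 * χ x.2 := rfl

theorem isPrimitive_prodAddChar {φ : AddChar A M} {χ : AddChar B M} (hφ : φ.IsPrimitive)
    (hχ : χ.IsPrimitive) : (prodAddChar φ χ).IsPrimitive := by
  refine fun a ha h => ha (Prod.ext ?_ ?_)
  · by_contra hfst
    refine hφ hfst (DFunLike.ext _ _ fun x => ?_)
    simpa [AddChar.mulShift_apply, prodAddChar_apply] using DFunLike.congr_fun h (x, 0)
  · by_contra hsnd
    refine hχ hsnd (DFunLike.ext _ _ fun x => ?_)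
    simpa [AddChar.mulShift_apply, prodAddChar_apply] using DFunLike.congr_fun h (0, x)

end Orthogonality

section Counting

variable {K : Type*} [Field K] [Algebra (ZMod 2) K]

lemma traceFn_two_eq_algebraMap_iff [Finite K] {n : ℕ} (hn : Module.finrank (ZMod 2) K = n)
    (a : K) (k : ℕ) (t : ZMod 2) :
    traceFn 2 n k a = algebraMap (ZMod 2) K t ↔
      (fieldPolynomial (ZMod 2) a).reverse.coeff k = t := by
  have : CharP K 2 := charP_of_injective_algebraMap (algebraMap (ZMod 2) K).injective 2
  rw [← (algebraMap (ZMod 2) K).injective.eq_iff, algebraMap_coeff_reverse_fieldPolynomial,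
    CharTwo.neg_eq, one_pow, one_mul, ZMod.card, hn]

variable [Fintype K]

theorem sum_addChar_revLog_fieldPolynomial {ψ : AddChar (ZMod 8 × ZMod 2) ℂ} (hψ : ψ ≠ 1) :
    ∑ a : K, ψ (revLog (fieldPolynomial (ZMod 2) a)) =
      -rootPowerSum (Module.finrank (ZMod 2) K) (lPolynomial (ψ (1, 0)) (ψ (0, 1))) := by
  rw [sum_fieldPolynomial fun f => ψ (revLog f)]
  refine sum_vonMangoldt_mul_eq_neg_rootPowerSum (c := fun f => ψ (revLog f)) (fun f g hf hg => ?_)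
    (lPolynomial_monic _ _) (IsAlgClosed.splits _) (lSeries_revLog hψ) Module.finrank_pos.ne'
  rw [revLog_mul hf hg, AddChar.map_add_eq_mul]

lemma sum_zmod_eight {M : Type*} [AddCommMonoid M] (f : ZMod 8 → M) :
    ∑ x, f x = f 0 + f 1 + f 2 + f 3 + f 4 + f 5 + f 6 + f 7 :=
  Fin.sum_univ_eight f

/-- The character of `ZMod 8 × ZMod 2` with values `z` and `-1` at the two generators, where `z`
is an eighth root of unity. -/
noncomputable def generatingChar {z : ℂ} (hz : z ^ 8 = 1) : AddChar (ZMod 8 × ZMod 2) ℂ :=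
  prodAddChar (AddChar.zmodChar 8 hz) (AddChar.zmodChar 2 (by norm_num : (-1 : ℂ) ^ 2 = 1))

lemma generatingChar_apply {z : ℂ} (hz : z ^ 8 = 1) (x : ZMod 8 × ZMod 2) :
    generatingChar hz x = z ^ x.1.val * (-1) ^ x.2.val := by
  simp only [generatingChar, prodAddChar_apply, AddChar.zmodChar_apply]

lemma isPrimitive_generatingChar {z : ℂ} (hz : IsPrimitiveRoot z 8) :
    (generatingChar hz.pow_eq_one).IsPrimitive :=
  isPrimitive_prodAddChar (AddChar.zmodChar_primitive_of_primitive_root 8 hz)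
    (AddChar.zmodChar_primitive_of_primitive_root 2 (IsPrimitiveRoot.neg_one 0 (by norm_num)))

lemma generatingChar_neg_mul {z : ℂ} (hz : z ^ 8 = 1) (hz4 : z ^ 4 = -1) (t : ZMod 8 × ZMod 2)
    (u v : ZMod 2) :
    generatingChar hz (-(t * (4 * (v.val : ZMod 8), u))) =
      ((-1) ^ t.1.val) ^ v.val * ((-1) ^ t.2.val) ^ u.val := by
  have hfst : (-(t.1 * (4 * (v.val : ZMod 8)))).val = 4 * (t.1.val * v.val % 2) := by
    generalize t.1 = k
    revert k v
    decide
  have hsnd : (-(t.2 * u)).val = t.2.val * u.val % 2 := by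
    rw [ZModModule.neg_eq_self, ZMod.val_mul]
  rw [generatingChar_apply, Prod.fst_neg, Prod.snd_neg, Prod.fst_mul, Prod.snd_mul, hfst, hsnd,
    pow_mul, hz4, ← neg_one_pow_eq_pow_mod_two, ← neg_one_pow_eq_pow_mod_two, pow_mul, pow_mul]

theorem sum_mulShift_generatingChar {z : ℂ} (hz : IsPrimitiveRoot z 8) {t : ZMod 8 × ZMod 2}
    (ht : t ≠ 0) :
    ∑ a : K, (generatingChar hz.pow_eq_one).mulShift t (revLog (fieldPolynomial (ZMod 2) a)) =
      -rootPowerSum (Module.finrank (ZMod 2) K)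
        (lPolynomial (z ^ t.1.val) ((-1) ^ t.2.val)) := by
  rw [sum_addChar_revLog_fieldPolynomial (isPrimitive_generatingChar hz ht)]
  simp [AddChar.mulShift_apply, generatingChar_apply]

theorem card_revLog_fieldPolynomial_eq (u v : ZMod 2) {n : ℕ}
    (hn : Module.finrank (ZMod 2) K = n) :
    (16 * (Finset.univ.filter fun a : K =>
        revLog (fieldPolynomial (ZMod 2) a) = (4 * (v.val : ZMod 8), u)).card : ℂ) =
      2 ^ n - (rho n d21 + (-1) ^ u.val * (rho n d21 + rho n d22 + rho n d41) +
        (-1) ^ v.val * (2 * rho n d22 + rho n d81) +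
        (-1) ^ (u.val + v.val) * (2 * rho n d21 + rho n d82)) := by
  obtain ⟨z, hz⟩ : ∃ z : ℂ, IsPrimitiveRoot z 8 :=
    ⟨_, Complex.isPrimitiveRoot_exp 8 (by norm_num)⟩
  have hz4 : z ^ 4 = -1 := (hz.pow (by norm_num) (by norm_num : 8 = 4 * 2)).eq_neg_one_of_two_right
  have hn0 : n ≠ 0 := hn ▸ Module.finrank_pos.ne'
  have hzero : ∑ a : K, (generatingChar hz.pow_eq_one).mulShift 0
      (revLog (fieldPolynomial (ZMod 2) a)) = 2 ^ n := by
    simp [Module.card_eq_pow_finrank (K := ZMod 2) (V := K), hn]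
  have hsum := card_mul_card_filter_eq_sum_addChar (isPrimitive_generatingChar hz) Finset.univ
    (fun a : K => revLog (fieldPolynomial (ZMod 2) a)) (4 * (v.val : ZMod 8), u)
  simp only [generatingChar_neg_mul _ hz4, Fintype.sum_prod_type, sum_zmod_two, sum_zmod_eight,
    Prod.mk_zero_zero, hzero] at hsum
  simp (disch := decide) only [sum_mulShift_generatingChar hz, hn] at hsum
  have hcard : Fintype.card (ZMod 8 × ZMod 2) = 16 := rfl
  have hone : (1 : ZMod 8).val = 1 := rfl
  have hone' : (1 : ZMod 2).val = 1 := rfl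
  simp (disch := decide) only [hcard, ZMod.val_zero, hone, hone', ZMod.val_ofNat_of_lt, pow_zero,
    pow_one, Nat.cast_ofNat] at hsum
  linear_combination hsum - sum_rootPowerSum_lPolynomial_even_one hn0 hz4 -
    (-1) ^ u.val * sum_rootPowerSum_lPolynomial_even_neg_one hn0 hz4 -
    (-1) ^ v.val * sum_rootPowerSum_lPolynomial_odd_one n hz4 -
    (-1) ^ (u.val + v.val) * sum_rootPowerSum_lPolynomial_odd_neg_one n hz4

end Counting

theorem cnt4_eq_card_revLog_eq {K : Type} [Field K] [Fintype K] [Algebra (ZMod 2) K] {n : ℕ}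
    (hn : Module.finrank (ZMod 2) K = n) (u v : ZMod 2) :
    cnt4 n K 0 0 (algebraMap (ZMod 2) K u) (algebraMap (ZMod 2) K v) =
      (Finset.univ.filter fun a : K =>
        revLog (fieldPolynomial (ZMod 2) a) = (4 * (v.val : ZMod 8), u)).card := by
  rw [cnt4, ← Fintype.card_subtype, ← Nat.card_eq_fintype_card, ← map_zero (algebraMap (ZMod 2) K)]
  refine Nat.card_congr (Equiv.subtypeEquivRight fun a => ?_)
  simp only [traceFn_two_eq_algebraMap_iff hn, revLog, ← coeffLog_zero_zero]
  simpa only [Prod.mk.injEq] using (coeffLog_bijective.injective.eq_iff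
    (a := ((fieldPolynomial (ZMod 2) a).reverse.coeff 1, _, _, _)) (b := (0, 0, u, v))).symm

theorem cnt4_zero_zero {K : Type} [Field K] [Fintype K] [Algebra (ZMod 2) K] {n : ℕ}
    (hn : Module.finrank (ZMod 2) K = n) (u v : ZMod 2) :
    16 * (cnt4 n K 0 0 (algebraMap (ZMod 2) K u) (algebraMap (ZMod 2) K v) : ℂ) =
      2 ^ n - (rho n d21 + (-1) ^ u.val * (rho n d21 + rho n d22 + rho n d41) +
        (-1) ^ v.val * (2 * rho n d22 + rho n d81) +
        (-1) ^ (u.val + v.val) * (2 * rho n d21 + rho n d82)) := by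
  rw [cnt4_eq_card_revLog_eq hn, card_revLog_fieldPolynomial_eq u v hn]

theorem statement13 (n : ℕ) (hn : 4 ≤ n)
    (K : Type) [Field K] [Fintype K] (hK : Fintype.card K = 2 ^ n) :
    ((cnt4 n K 0 0 0 0 : ℂ)
      = 2 ^ (n - 4) - (1 / 16) *
          (4 * rho n d21 + 3 * rho n d22 + rho n d41 + rho n d81 + rho n d82)) ∧
    ((cnt4 n K 0 0 0 1 : ℂ)
      = 2 ^ (n - 4) - (1 / 16) *
          (-rho n d22 + rho n d41 - rho n d81 - rho n d82)) ∧
    ((cnt4 n K 0 0 1 0 : ℂ)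
      = 2 ^ (n - 4) - (1 / 16) *
          (-2 * rho n d21 + rho n d22 - rho n d41 + rho n d81 - rho n d82)) ∧
    ((cnt4 n K 0 0 1 1 : ℂ)
      = 2 ^ (n - 4) - (1 / 16) *
          (2 * rho n d21 - 3 * rho n d22 - rho n d41 - rho n d81 + rho n d82)) := by
  have : CharP K 2 := charP_of_card_eq_prime_pow hK
  let := ZMod.algebra K 2
  have hfinrank : Module.finrank (ZMod 2) K = n := by
    refine Nat.pow_right_injective le_rfl ?_
    simp only [← hK, Module.card_eq_pow_finrank (K := ZMod 2) (V := K), ZMod.card]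
  have hpow : (2 : ℂ) ^ n = 16 * 2 ^ (n - 4) := by
    rw [← pow_mul_pow_sub 2 hn]
    norm_num
  have h00 := cnt4_zero_zero hfinrank 0 0
  have h01 := cnt4_zero_zero hfinrank 0 1
  have h10 := cnt4_zero_zero hfinrank 1 0
  have h11 := cnt4_zero_zero hfinrank 1 1
  simp only [map_zero, map_one, ZMod.val_zero, ZMod.val_one, hpow] at h00 h01 h10 h11
  refine ⟨?_, ?_, ?_, ?_⟩
  · linear_combination h00 / 16
  · linear_combination h01 / 16
  · linear_combination h10 / 16
  · linear_combination h11 / 16
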